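/- arXiv:1703.07728 — 2 statements merged into one kernel-verified Lean document; each statement's English description precedes it below -/
import Mathlib

section
/- Let B = {x ∈ ℝ^N : |x| ≤ r_N} be the Euclidean ball of volume 1 in ℝ^N. Then there exists a constant c > π r_N / N such that for all ζ ∈ ℝ^N with |ζ| ≤ 1, the Fourier transform of χ_B satisfies |χ̂_B(ζ)| ≤ e^{-c|ζ|²}, for c chosen appropriately (in particular, a Gaussian upper bound of the form e^{-c|ζ|²} holds on the unit ball for some c > 0). -/
open MeasureTheory Real
open scoped RealInnerProductSpace

/-- Over a centred ball, the integral of a function of `⟪x, v⟫` depends only on `‖v‖`. -/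
theorem setIntegral_closedBall_inner_congr {E : Type*} [NormedAddCommGroup E]
    [InnerProductSpace ℝ E] [FiniteDimensional ℝ E] [MeasurableSpace E] [BorelSpace E]
    (r : ℝ) (h : ℝ → ℝ) {v w : E} (hvw : ‖v‖ = ‖w‖) :
    ∫ x in Metric.closedBall (0 : E) r, h ⟪x, v⟫ = ∫ x in Metric.closedBall (0 : E) r, h ⟪x, w⟫ := by
  set e : E ≃ₗᵢ[ℝ] E := (ℝ ∙ (v - w))ᗮ.reflection
  have hev : e v = w := Submodule.reflection_sub hvw
  rw [← e.measurePreserving.setIntegral_preimage_emb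
    e.toHomeomorph.measurableEmbedding (fun x => h ⟪x, w⟫) (Metric.closedBall 0 r)]
  have hpre : e ⁻¹' Metric.closedBall 0 r = Metric.closedBall 0 r := by
    ext x; simp
  rw [hpre]
  simp only [← hev, LinearIsometryEquiv.inner_map_map]

theorem setIntegral_closedBall_fun_norm {E : Type*} [NormedAddCommGroup E]
    [NormedSpace ℝ E] [FiniteDimensional ℝ E] [Nontrivial E] [MeasurableSpace E] [BorelSpace E]
    (μ : Measure E) [μ.IsAddHaarMeasure] {r : ℝ} (hr : 0 ≤ r) (f : ℝ → ℝ) :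
    ∫ x in Metric.closedBall (0 : E) r, f ‖x‖ ∂μ =
      Module.finrank ℝ E * μ.real (Metric.ball 0 1) *
        ∫ y in (0 : ℝ)..r, y ^ (Module.finrank ℝ E - 1) * f y := by
  have h1 : ∫ x in Metric.closedBall (0 : E) r, f ‖x‖ ∂μ =
      ∫ x, (Set.Iic r).indicator f ‖x‖ ∂μ := by
    rw [← integral_indicator Metric.isClosed_closedBall.measurableSet]
    congr 1 with x
    simp [Set.indicator]
  have h2 (y : ℝ) : y ^ (Module.finrank ℝ E - 1) • (Set.Iic r).indicator f y =
      (Set.Iic r).indicator (fun y => y ^ (Module.finrank ℝ E - 1) * f y) y := by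
    simp [Set.indicator_apply]
  rw [h1, integral_fun_norm_addHaar, intervalIntegral.integral_of_le hr]
  simp only [h2]
  rw [setIntegral_indicator measurableSet_Iic, Set.Ioi_inter_Iic, nsmul_eq_mul, smul_eq_mul,
    mul_assoc]

section Moments

variable {N : ℕ} {r : ℝ}

theorem pow_mul_volume_ball_one (hr : 0 ≤ r)
    (hB : volume (Metric.closedBall (0 : EuclideanSpace ℝ (Fin N)) r) = 1) :
    r ^ N * volume.real (Metric.ball (0 : EuclideanSpace ℝ (Fin N)) 1) = 1 := by
  have := Measure.addHaar_real_closedBall (volume : Measure (EuclideanSpace ℝ (Fin N))) 0 hr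
  simpa [Measure.real, hB] using this.symm

theorem setIntegral_closedBall_norm_pow (hN : 1 ≤ N) (hr : 0 < r)
    (hB : volume (Metric.closedBall (0 : EuclideanSpace ℝ (Fin N)) r) = 1) (k : ℕ) :
    ∫ x in Metric.closedBall (0 : EuclideanSpace ℝ (Fin N)) r, ‖x‖ ^ k = N * r ^ k / (N + k) := by
  have : Nonempty (Fin N) := ⟨⟨0, hN⟩⟩
  have hV := pow_mul_volume_ball_one hr.le hB
  rw [setIntegral_closedBall_fun_norm volume hr.le (fun y => y ^ k)]
  simp only [← pow_add, integral_pow, finrank_euclideanSpace, Fintype.card_fin]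
  have e : N - 1 + k + 1 = N + k := by omega
  have e' : ((N - 1 + k : ℕ) : ℝ) + 1 = N + k := by exact_mod_cast e
  have h0 : (0 : ℝ) < N + k := by positivity
  rw [e, e', zero_pow (by omega), pow_add]
  field_simp
  linear_combination r ^ k * hV

theorem integrableOn_closedBall_of_continuous {f : EuclideanSpace ℝ (Fin N) → ℝ}
    (hf : Continuous f) : IntegrableOn f (Metric.closedBall 0 r) :=
  hf.continuousOn.integrableOn_compact (isCompact_closedBall _ _)

theorem setIntegral_closedBall_inner_pow_eq (k : ℕ) (v : EuclideanSpace ℝ (Fin N)) (i : Fin N) :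
    ∫ x in Metric.closedBall (0 : EuclideanSpace ℝ (Fin N)) r, ⟪x, v⟫ ^ k =
      ‖v‖ ^ k * ∫ x in Metric.closedBall (0 : EuclideanSpace ℝ (Fin N)) r, x i ^ k := by
  rw [setIntegral_closedBall_inner_congr r (· ^ k)
    (w := ‖v‖ • EuclideanSpace.single i (1 : ℝ)) (by simp [norm_smul]), ← integral_const_mul]
  simp [inner_smul_right, mul_pow, EuclideanSpace.inner_single_right]

theorem setIntegral_closedBall_inner_sq (hN : 1 ≤ N) (hr : 0 < r)
    (hB : volume (Metric.closedBall (0 : EuclideanSpace ℝ (Fin N)) r) = 1)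
    (v : EuclideanSpace ℝ (Fin N)) :
    ∫ x in Metric.closedBall (0 : EuclideanSpace ℝ (Fin N)) r, ⟪x, v⟫ ^ 2 =
      ‖v‖ ^ 2 * (r ^ 2 / (N + 2)) := by
  set B := Metric.closedBall (0 : EuclideanSpace ℝ (Fin N)) r
  set i₀ : Fin N := ⟨0, hN⟩
  have hsym (i : Fin N) : ∫ x in B, x i ^ 2 = ∫ x in B, x i₀ ^ 2 := by
    simpa [EuclideanSpace.inner_single_right] using
      setIntegral_closedBall_inner_pow_eq (r := r) 2 (EuclideanSpace.single i (1 : ℝ)) i₀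
  have hsum : ∫ x in B, ‖x‖ ^ 2 = N * ∫ x in B, x i₀ ^ 2 := by
    simp_rw [EuclideanSpace.real_norm_sq_eq]
    rw [integral_finsetSum _ fun i _ =>
      integrableOn_closedBall_of_continuous (f := fun x => x i ^ 2) (by fun_prop)]
    simp only [B] at hsym
    simp [B, hsym]
  rw [setIntegral_closedBall_norm_pow hN hr hB] at hsum
  rw [setIntegral_closedBall_inner_pow_eq 2 v i₀]
  congr 1
  have : (N : ℝ) ≠ 0 := by positivity
  refine mul_left_cancel₀ this (hsum.symm.trans ?_)
  push_cast; ring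

theorem setIntegral_closedBall_inner_pow_four (hN : 1 ≤ N) (hr : 0 < r)
    (hB : volume (Metric.closedBall (0 : EuclideanSpace ℝ (Fin N)) r) = 1)
    (v : EuclideanSpace ℝ (Fin N)) :
    ∫ x in Metric.closedBall (0 : EuclideanSpace ℝ (Fin N)) r, ⟪x, v⟫ ^ 4 =
      ‖v‖ ^ 4 * (3 * r ^ 4 / ((N + 2) * (N + 4))) := by
  set B := Metric.closedBall (0 : EuclideanSpace ℝ (Fin N)) r with hBdef
  set i₀ : Fin N := ⟨0, hN⟩
  set K := ∫ x in B, x i₀ ^ 4 with hK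
  have hfB {f : EuclideanSpace ℝ (Fin N) → ℝ} (hf : Continuous f) : IntegrableOn f B :=
    integrableOn_closedBall_of_continuous hf
  have hdiag (i : Fin N) : ∫ x in B, x i ^ 4 = K := by
    simpa [EuclideanSpace.inner_single_right] using
      setIntegral_closedBall_inner_pow_eq (r := r) 4 (EuclideanSpace.single i (1 : ℝ)) i₀
  have hoff (i j : Fin N) (hij : i ≠ j) : ∫ x in B, x i ^ 2 * x j ^ 2 = K / 3 := by
    have hn (s : ℝ) (hs : s ^ 2 = 1) :
        ∫ x in B, (x i + s * x j) ^ 4 = 4 * K := by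
      have h := setIntegral_closedBall_inner_pow_eq (r := r) 4
        (EuclideanSpace.single i (1 : ℝ) + EuclideanSpace.single j s) i₀
      have hnorm : ‖EuclideanSpace.single i (1 : ℝ) + EuclideanSpace.single j s‖ ^ 2 = 2 := by
        rw [norm_add_sq_real]
        simp [EuclideanSpace.inner_single_right, hij, hs]
        norm_num
      rw [show (4 : ℕ) = 2 * 2 from rfl, pow_mul ‖_‖, hnorm] at h
      simp only [inner_add_right, EuclideanSpace.inner_single_right, one_mul, Nat.reduceMul,
        conj_trivial] at h
      rw [← hBdef, ← hK] at h
      rw [h]; norm_num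
    have hp := hn 1 (by norm_num)
    have hm := hn (-1) (by norm_num)
    have key : ∫ x in B, ((x i + 1 * x j) ^ 4 + (x i + (-1) * x j) ^ 4) =
        ∫ x in B, (2 * x i ^ 4 + 2 * x j ^ 4 + 12 * (x i ^ 2 * x j ^ 2)) := by
      congr 1 with x; ring
    rw [integral_add (hfB (by fun_prop)) (hfB (by fun_prop)), hp, hm,
      integral_add (hfB (by fun_prop)) (hfB (by fun_prop)),
      integral_add (hfB (by fun_prop)) (hfB (by fun_prop)), integral_const_mul,
      integral_const_mul, integral_const_mul, hdiag, hdiag] at key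
    linarith
  have hsum : ∫ x in B, ‖x‖ ^ 4 = N * ((N + 2) * K / 3) := by
    have hx (x : EuclideanSpace ℝ (Fin N)) : ‖x‖ ^ 4 = ∑ i, ∑ j, x i ^ 2 * x j ^ 2 := by
      rw [show (4 : ℕ) = 2 * 2 from rfl, pow_mul, EuclideanSpace.real_norm_sq_eq, sq,
        Finset.sum_mul_sum]
    have hij (i j : Fin N) : ∫ x in B, x i ^ 2 * x j ^ 2 =
        K / 3 + if i = j then 2 * K / 3 else 0 := by
      split_ifs with h
      · subst h
        simp only [← pow_add, Nat.reduceAdd, hdiag]; ring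
      · simp [hoff i j h]
    simp_rw [hx]
    rw [integral_finsetSum _ fun i _ => hfB (by fun_prop)]
    have hi (i : Fin N) : ∫ x in B, ∑ j, x i ^ 2 * x j ^ 2 = (N + 2) * K / 3 := by
      rw [integral_finsetSum _ fun j _ => hfB (by fun_prop)]
      simp only [hij, Finset.sum_add_distrib, Finset.sum_ite_eq, Finset.sum_const,
        Finset.card_univ, Fintype.card_fin, nsmul_eq_mul, Finset.mem_univ, if_true]
      ring
    simp [hi]
  rw [setIntegral_closedBall_norm_pow hN hr hB] at hsum
  rw [setIntegral_closedBall_inner_pow_eq 4 v i₀, ← hBdef, ← hK]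
  congr 1
  have : (0 : ℝ) < N := by positivity
  push_cast at hsum
  field_simp at hsum ⊢
  linarith

end Moments

theorem nonneg_of_hasDerivAt_nonneg {f f' : ℝ → ℝ} (hf : ∀ x, HasDerivAt f (f' x) x)
    (h0 : f 0 = 0) (h' : ∀ x, 0 ≤ x → 0 ≤ f' x) {x : ℝ} (hx : 0 ≤ x) : 0 ≤ f x := by
  have hmono : MonotoneOn f (Set.Ici 0) := by
    refine monotoneOn_of_deriv_nonneg (convex_Ici 0)
      (fun x _ => (hf x).continuousAt.continuousWithinAt)
      (fun x _ => (hf x).differentiableAt.differentiableWithinAt) fun x hx => ?_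
    rw [(hf x).deriv]
    exact h' x (interior_subset hx)
  exact h0 ▸ hmono Set.self_mem_Ici hx hx

theorem cos_le_quartic_of_nonneg_and_sextic_le {x : ℝ} (hx : 0 ≤ x) :
    cos x ≤ 1 - x ^ 2 / 2 + x ^ 4 / 24 ∧
      1 - x ^ 2 / 2 + x ^ 4 / 24 - x ^ 6 / 720 ≤ cos x := by
  have pw (n : ℕ) (x : ℝ) : HasDerivAt (fun x : ℝ => x ^ n) (n * x ^ (n - 1)) x :=
    hasDerivAt_pow n x
  have h3 : ∀ x : ℝ, 0 ≤ x → 0 ≤ sin x - (x - x ^ 3 / 6) := fun x hx =>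
    nonneg_of_hasDerivAt_nonneg (f := fun x => sin x - (x - x ^ 3 / 6))
      (f' := fun x => cos x - (1 - x ^ 2 / 2))
      (fun x => ((hasDerivAt_sin x).sub ((hasDerivAt_id x).sub ((pw 3 x).div_const 6))).congr_deriv
        (by norm_num; ring)) (by simp)
      (fun x _ => sub_nonneg.2 (one_sub_sq_div_two_le_cos)) hx
  have h4 : ∀ x : ℝ, 0 ≤ x → 0 ≤ 1 - x ^ 2 / 2 + x ^ 4 / 24 - cos x := fun x hx =>
    nonneg_of_hasDerivAt_nonneg (f := fun x => 1 - x ^ 2 / 2 + x ^ 4 / 24 - cos x)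
      (f' := fun x => sin x - (x - x ^ 3 / 6))
      (fun x => (((((pw 2 x).div_const 2).const_sub 1).add ((pw 4 x).div_const 24)).sub
        (hasDerivAt_cos x)).congr_deriv (by norm_num; ring)) (by simp) h3 hx
  have h5 : ∀ x : ℝ, 0 ≤ x → 0 ≤ x - x ^ 3 / 6 + x ^ 5 / 120 - sin x := fun x hx =>
    nonneg_of_hasDerivAt_nonneg (f := fun x => x - x ^ 3 / 6 + x ^ 5 / 120 - sin x)
      (f' := fun x => 1 - x ^ 2 / 2 + x ^ 4 / 24 - cos x)
      (fun x => ((((hasDerivAt_id x).sub ((pw 3 x).div_const 6)).add ((pw 5 x).div_const 120)).sub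
        (hasDerivAt_sin x)).congr_deriv (by norm_num; ring)) (by simp) h4 hx
  have h6 : 0 ≤ cos x - (1 - x ^ 2 / 2 + x ^ 4 / 24 - x ^ 6 / 720) :=
    nonneg_of_hasDerivAt_nonneg
      (f := fun x => cos x - (1 - x ^ 2 / 2 + x ^ 4 / 24 - x ^ 6 / 720))
      (f' := fun x => x - x ^ 3 / 6 + x ^ 5 / 120 - sin x)
      (fun x => ((hasDerivAt_cos x).sub (((((pw 2 x).div_const 2).const_sub 1).add
        ((pw 4 x).div_const 24)).sub ((pw 6 x).div_const 720))).congr_deriv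
          (by norm_num; ring)) (by simp) h5 hx
  exact ⟨sub_nonneg.1 (h4 x hx), sub_nonneg.1 h6⟩

theorem cos_le_quartic (x : ℝ) : cos x ≤ 1 - x ^ 2 / 2 + x ^ 4 / 24 := by
  have h := (cos_le_quartic_of_nonneg_and_sextic_le (abs_nonneg x)).1
  rwa [cos_abs, sq_abs, Even.pow_abs (by decide)] at h

theorem sextic_le_cos (x : ℝ) : 1 - x ^ 2 / 2 + x ^ 4 / 24 - x ^ 6 / 720 ≤ cos x := by
  have h := (cos_le_quartic_of_nonneg_and_sextic_le (abs_nonneg x)).2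
  rwa [cos_abs, sq_abs, Even.pow_abs (by decide), Even.pow_abs (by decide)] at h

theorem sin_pi_mul_le_mul_exp {x : ℝ} (h0 : 0 ≤ x) (h1 : x ≤ 1) :
    sin (π * x) ≤ π * x * exp (-(π ^ 2 / 6) * x ^ 2) := by
  have hz : Filter.Tendsto (fun n : ℕ => ∑ j ∈ Finset.range n, (1 : ℝ) / ((j : ℝ) + 1) ^ 2)
      Filter.atTop (nhds (π ^ 2 / 6)) := by
    have h := ((hasSum_nat_add_iff' 1).2 hasSum_zeta_two).tendsto_sum_nat
    simpa using h
  have hlim : Filter.Tendsto (fun n : ℕ => π * x *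
      exp (-(∑ j ∈ Finset.range n, (1 : ℝ) / ((j : ℝ) + 1) ^ 2) * x ^ 2))
      Filter.atTop (nhds (π * x * exp (-(π ^ 2 / 6) * x ^ 2))) :=
    ((continuous_exp.tendsto _).comp (hz.neg.mul_const _)).const_mul _
  refine le_of_tendsto_of_tendsto' (Real.tendsto_euler_sin_prod x) hlim fun n => ?_
  refine mul_le_mul_of_nonneg_left ?_ (by positivity)
  rw [neg_mul, Finset.sum_mul, ← Finset.sum_neg_distrib, exp_sum]
  refine Finset.prod_le_prod (fun j _ => ?_) fun j _ => ?_
  · have hj : (0 : ℝ) ≤ j := j.cast_nonneg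
    rw [sub_nonneg, div_le_one (by positivity)]
    nlinarith
  · refine le_trans (le_of_eq ?_) (add_one_le_exp _)
    ring

theorem Gamma_half_add_two (N : ℕ) :
    Gamma (((N + 2 : ℕ) : ℝ) / 2 + 1) = ((N : ℝ) / 2 + 1) * Gamma ((N : ℝ) / 2 + 1) := by
  rw [← Gamma_add_one (by positivity)]
  congr 1; push_cast; ring

theorem sq_Gamma_one_half_add_one : Gamma (((1 : ℕ) : ℝ) / 2 + 1) ^ 2 = π / 4 := by
  rw [Nat.cast_one, Gamma_add_one (by norm_num), Gamma_one_half_eq, mul_pow, sq_sqrt pi_nonneg]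
  ring

theorem sq_Gamma_two_half_add_one : Gamma (((2 : ℕ) : ℝ) / 2 + 1) ^ 2 = 1 := by norm_num

/-- `Γ(N/2 + 1)² ≤ ((N + 2) / 4) ^ N` for `N ≥ 2`. -/
theorem Gamma_half_sq_le : ∀ N : ℕ, 2 ≤ N → Gamma ((N : ℝ) / 2 + 1) ^ 2 ≤ (((N : ℝ) + 2) / 4) ^ N
  | 0, h => by omega
  | 1, h => by omega
  | 2, _ => by
    rw [sq_Gamma_two_half_add_one]; norm_num
  | 3, _ => by
    rw [Gamma_half_add_two 1, mul_pow, sq_Gamma_one_half_add_one]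
    norm_num
    linarith [pi_lt_d2]
  | N + 4, _ => by
    have ih := Gamma_half_sq_le (N + 2) (by omega)
    have hG : Gamma (((N + 4 : ℕ) : ℝ) / 2 + 1) =
        (((N : ℝ) + 4) / 2) * Gamma (((N + 2 : ℕ) : ℝ) / 2 + 1) := by
      rw [Gamma_half_add_two (N + 2)]
      push_cast; ring
    have hb : (4 : ℝ) ≤ (1 + 2 / ((N : ℝ) + 4)) ^ (N + 4) := by
      have h := one_add_mul_self_le_rpow_one_add (s := 2 / ((N : ℝ) + 4))
        (p := ((N : ℝ) + 4) / 2) (by have : (0 : ℝ) ≤ 2 / ((N : ℝ) + 4) := by positivity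
                                     linarith)
        (by have : (0 : ℝ) ≤ N := by positivity
            linarith)
      have e : ((N : ℝ) + 4) / 2 * (2 / ((N : ℝ) + 4)) = 1 := by field_simp
      rw [e] at h
      have h2 := pow_le_pow_left₀ (by norm_num) h 2
      rw [← rpow_mul_natCast (by positivity), Nat.cast_ofNat,
        div_mul_cancel₀ _ (by norm_num)] at h2
      rw [← rpow_natCast]
      push_cast
      linarith
    rw [hG, mul_pow]
    push_cast at ih ⊢
    calc (((N : ℝ) + 4) / 2) ^ 2 * Gamma (((N : ℝ) + 2) / 2 + 1) ^ 2
        ≤ (((N : ℝ) + 4) / 2) ^ 2 * (((N : ℝ) + 2 + 2) / 4) ^ (N + 2) := by gcongr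
      _ = (((N : ℝ) + 4) / 4) ^ (N + 4) * 4 := by ring
      _ ≤ (((N : ℝ) + 4) / 4) ^ (N + 4) * (1 + 2 / ((N : ℝ) + 4)) ^ (N + 4) := by gcongr
      _ = (((N : ℝ) + 4 + 2) / 4) ^ (N + 4) := by
        rw [← mul_pow]; congr 1; field_simp

theorem pow_le_Gamma_half_sq_of_step {A : ℝ} (hA : 0 ≤ A) {m : ℕ} (hm : A ≤ (m : ℝ) / 2 + 1)
    (h0 : A ^ m ≤ Gamma ((m : ℝ) / 2 + 1) ^ 2)
    (h1 : A ^ (m + 1) ≤ Gamma (((m + 1 : ℕ) : ℝ) / 2 + 1) ^ 2) (N : ℕ) (hN : m ≤ N) :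
    A ^ N ≤ Gamma ((N : ℝ) / 2 + 1) ^ 2 := by
  have step (N : ℕ) (hN : m ≤ N) (h : A ^ N ≤ Gamma ((N : ℝ) / 2 + 1) ^ 2) :
      A ^ (N + 2) ≤ Gamma (((N + 2 : ℕ) : ℝ) / 2 + 1) ^ 2 := by
    have hN' : (m : ℝ) ≤ N := by exact_mod_cast hN
    rw [Gamma_half_add_two, mul_pow, pow_add, mul_comm]
    gcongr
    linarith
  obtain ⟨k, rfl⟩ := Nat.exists_eq_add_of_le hN
  induction k using Nat.twoStepInduction with
  | zero => exact h0
  | one => exact h1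
  | more k ih _ => exact step (m + k) (by omega) (ih (by omega))

theorem pow_le_Gamma_half_sq (N : ℕ) (hN : 3 ≤ N) :
    (6 / 5 : ℝ) ^ N ≤ Gamma ((N : ℝ) / 2 + 1) ^ 2 := by
  refine pow_le_Gamma_half_sq_of_step (by norm_num) (m := 3) (by norm_num) ?_ ?_ N hN
  · rw [Gamma_half_add_two 1, mul_pow, sq_Gamma_one_half_add_one]
    norm_num
    linarith [pi_gt_d2]
  · rw [Gamma_half_add_two 2]
    simp only [mul_pow, sq_Gamma_two_half_add_one]
    norm_num

theorem two_pow_le_Gamma_half_sq (N : ℕ) (hN : 7 ≤ N) :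
    (2 : ℝ) ^ N ≤ Gamma ((N : ℝ) / 2 + 1) ^ 2 := by
  refine pow_le_Gamma_half_sq_of_step (by norm_num) (m := 7) (by norm_num) ?_ ?_ N hN
  · rw [Gamma_half_add_two 5, Gamma_half_add_two 3, Gamma_half_add_two 1]
    simp only [mul_pow, sq_Gamma_one_half_add_one]
    norm_num
    linarith [pi_gt_d2]
  · rw [Gamma_half_add_two 6, Gamma_half_add_two 4, Gamma_half_add_two 2]
    simp only [mul_pow, sq_Gamma_two_half_add_one]
    norm_num

section BallFourier

variable {N : ℕ} {r : ℝ}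

theorem setIntegral_closedBall_cexp_inner (ζ : EuclideanSpace ℝ (Fin N)) :
    ∫ x in Metric.closedBall (0 : EuclideanSpace ℝ (Fin N)) r,
        Complex.exp (-(2 * (π : ℂ) * Complex.I) * (⟪x, ζ⟫ : ℝ)) =
      ((∫ x in Metric.closedBall (0 : EuclideanSpace ℝ (Fin N)) r, cos (2 * π * ⟪x, ζ⟫) : ℝ) : ℂ) := by
  set B := Metric.closedBall (0 : EuclideanSpace ℝ (Fin N)) r
  have hsin : ∫ x in B, sin (2 * π * ⟪x, ζ⟫) = 0 := by
    have h := setIntegral_closedBall_inner_congr r (fun t => sin (2 * π * t))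
      (v := ζ) (w := -ζ) (norm_neg ζ).symm
    simp only [inner_neg_right, mul_neg, sin_neg, integral_neg] at h
    linarith
  have hexp (x : EuclideanSpace ℝ (Fin N)) :
      Complex.exp (-(2 * (π : ℂ) * Complex.I) * (⟪x, ζ⟫ : ℝ)) =
        ((cos (2 * π * ⟪x, ζ⟫) : ℝ) : ℂ) - ((sin (2 * π * ⟪x, ζ⟫) : ℝ) : ℂ) * Complex.I := by
    rw [show -(2 * (π : ℂ) * Complex.I) * (⟪x, ζ⟫ : ℝ) =
      ((-(2 * π * ⟪x, ζ⟫) : ℝ) : ℂ) * Complex.I by push_cast; ring, Complex.exp_mul_I,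
      ← Complex.ofReal_cos, ← Complex.ofReal_sin, cos_neg, sin_neg]
    push_cast; ring
  have hc : Integrable (fun x => ((cos (2 * π * ⟪x, ζ⟫) : ℝ) : ℂ)) (volume.restrict B) :=
    (integrableOn_closedBall_of_continuous
      (f := fun x => cos (2 * π * ⟪x, ζ⟫)) (by fun_prop)).integrable.ofReal
  have hs : Integrable (fun x => ((sin (2 * π * ⟪x, ζ⟫) : ℝ) : ℂ)) (volume.restrict B) :=
    (integrableOn_closedBall_of_continuous
      (f := fun x => sin (2 * π * ⟪x, ζ⟫)) (by fun_prop)).integrable.ofReal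
  simp_rw [hexp]
  rw [integral_sub hc (hs.mul_const _), integral_mul_const, integral_complex_ofReal,
    integral_complex_ofReal, hsin]
  simp

theorem setIntegral_closedBall_quartic (hN : 1 ≤ N) (hr : 0 < r)
    (hB : volume (Metric.closedBall (0 : EuclideanSpace ℝ (Fin N)) r) = 1)
    (κ : ℝ) (v : EuclideanSpace ℝ (Fin N)) :
    ∫ x in Metric.closedBall (0 : EuclideanSpace ℝ (Fin N)) r,
        (1 - (2 * π * ⟪x, v⟫) ^ 2 / 2 + κ * (2 * π * ⟪x, v⟫) ^ 4) =
      1 - 2 * (π * r) ^ 2 / (N + 2) * ‖v‖ ^ 2 +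
        12 * κ * ((N + 2) / (N + 4)) * (2 * (π * r) ^ 2 / (N + 2) * ‖v‖ ^ 2) ^ 2 := by
  have hfB {f : EuclideanSpace ℝ (Fin N) → ℝ} (hf : Continuous f) :
      IntegrableOn f (Metric.closedBall 0 r) := integrableOn_closedBall_of_continuous hf
  have e (x : EuclideanSpace ℝ (Fin N)) :
      1 - (2 * π * ⟪x, v⟫) ^ 2 / 2 + κ * (2 * π * ⟪x, v⟫) ^ 4 =
        1 - 2 * π ^ 2 * ⟪x, v⟫ ^ 2 + 16 * κ * π ^ 4 * ⟪x, v⟫ ^ 4 := by ring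
  simp_rw [e]
  rw [integral_add (hfB (by fun_prop)) (hfB (by fun_prop)),
    integral_sub (hfB (by fun_prop)) (hfB (by fun_prop)), integral_const_mul, integral_const_mul,
    setIntegral_closedBall_inner_sq hN hr hB, setIntegral_closedBall_inner_pow_four hN hr hB]
  rw [setIntegral_const, Measure.real, hB, ENNReal.toReal_one, one_smul]
  field_simp
  ring

theorem setIntegral_closedBall_cos_le (hN : 1 ≤ N) (hr : 0 < r)
    (hB : volume (Metric.closedBall (0 : EuclideanSpace ℝ (Fin N)) r) = 1)
    (v : EuclideanSpace ℝ (Fin N)) :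
    ∫ x in Metric.closedBall (0 : EuclideanSpace ℝ (Fin N)) r, cos (2 * π * ⟪x, v⟫) ≤
      1 - 2 * (π * r) ^ 2 / (N + 2) * ‖v‖ ^ 2 +
        (N + 2) / (2 * (N + 4)) * (2 * (π * r) ^ 2 / (N + 2) * ‖v‖ ^ 2) ^ 2 := by
  have h := setIntegral_closedBall_quartic hN hr hB (1 / 24) v
  rw [show 12 * (1 / 24 : ℝ) * ((N + 2) / (N + 4)) = (N + 2) / (2 * (N + 4)) by
    field_simp; norm_num] at h
  rw [← h]
  refine setIntegral_mono (integrableOn_closedBall_of_continuous (by fun_prop))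
    (integrableOn_closedBall_of_continuous (by fun_prop)) fun x => ?_
  exact (cos_le_quartic _).trans_eq (by ring)

theorem le_setIntegral_closedBall_cos (hN : 1 ≤ N) (hr : 0 < r)
    (hB : volume (Metric.closedBall (0 : EuclideanSpace ℝ (Fin N)) r) = 1)
    (v : EuclideanSpace ℝ (Fin N)) :
    1 - 2 * (π * r) ^ 2 / (N + 2) * ‖v‖ ^ 2 ≤
      ∫ x in Metric.closedBall (0 : EuclideanSpace ℝ (Fin N)) r, cos (2 * π * ⟪x, v⟫) := by
  refine le_trans (le_of_eq ?_) ((setIntegral_closedBall_quartic hN hr hB 0 v).symm.le.trans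
    (setIntegral_mono (integrableOn_closedBall_of_continuous (by fun_prop))
    (integrableOn_closedBall_of_continuous (by fun_prop)) fun x => ?_))
  · ring
  · simpa using one_sub_sq_div_two_le_cos (x := 2 * π * ⟪x, v⟫)

theorem le_setIntegral_closedBall_cos_of_norm_le_one (hN : 1 ≤ N) (hr : 0 < r)
    (hB : volume (Metric.closedBall (0 : EuclideanSpace ℝ (Fin N)) r) = 1)
    {v : EuclideanSpace ℝ (Fin N)} (hv : ‖v‖ ≤ 1) :
    1 - 2 * (π * r) ^ 2 / (N + 2) * ‖v‖ ^ 2 + 12 * (1 / 24 - (π * r) ^ 2 / 180) *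
        ((N + 2) / (N + 4)) * (2 * (π * r) ^ 2 / (N + 2) * ‖v‖ ^ 2) ^ 2 ≤
      ∫ x in Metric.closedBall (0 : EuclideanSpace ℝ (Fin N)) r, cos (2 * π * ⟪x, v⟫) := by
  refine (setIntegral_closedBall_quartic hN hr hB (1 / 24 - (π * r) ^ 2 / 180) v).symm.le.trans
    (setIntegral_mono_on (integrableOn_closedBall_of_continuous (by fun_prop))
    (integrableOn_closedBall_of_continuous (by fun_prop))
    Metric.isClosed_closedBall.measurableSet fun x hx => le_trans ?_ (sextic_le_cos _))
  have hx' : ‖x‖ ≤ r := mem_closedBall_zero_iff.1 hx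
  have hi : |⟪x, v⟫| ≤ r := (abs_real_inner_le_norm x v).trans
    ((mul_le_mul hx' hv (norm_nonneg _) hr.le).trans_eq (mul_one r))
  have hy : (2 * π * ⟪x, v⟫) ^ 2 ≤ 4 * (π * r) ^ 2 := by
    have := (sq_le_sq₀ (abs_nonneg _) hr.le).2 hi
    rw [sq_abs] at this
    nlinarith [mul_le_mul_of_nonneg_left this (sq_nonneg π)]
  nlinarith [mul_le_mul_of_nonneg_right hy (by positivity : 0 ≤ (2 * π * ⟪x, v⟫) ^ 4)]

/-- In dimension one the Fourier transform of the indicator of `[-1/2, 1/2]` is `sinc (π ζ)`. -/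
theorem norm_mul_setIntegral_closedBall_cos_dim_one
    (hB : volume (Metric.closedBall (0 : EuclideanSpace ℝ (Fin 1)) (1 / 2)) = 1)
    (v : EuclideanSpace ℝ (Fin 1)) :
    π * ‖v‖ * ∫ x in Metric.closedBall (0 : EuclideanSpace ℝ (Fin 1)) (1 / 2),
      cos (2 * π * ⟪x, v⟫) = sin (π * ‖v‖) := by
  have hx (x : EuclideanSpace ℝ (Fin 1)) : cos (2 * π * ⟪x, v⟫) = cos (2 * π * ‖v‖ * ‖x‖) := by
    have : |⟪x, v⟫| = ‖v‖ * ‖x‖ := by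
      simp [PiLp.inner_apply, EuclideanSpace.norm_eq, Real.sqrt_sq_eq_abs, abs_mul]
    rw [← cos_abs, abs_mul, this, abs_of_pos two_pi_pos]
    congr 1; ring
  have hV := pow_mul_volume_ball_one (by norm_num) hB
  simp_rw [hx]
  rw [setIntegral_closedBall_fun_norm volume (by norm_num) (fun y => cos (2 * π * ‖v‖ * y))]
  simp only [finrank_euclideanSpace, Fintype.card_fin, Nat.sub_self, pow_zero, one_mul,
    Nat.cast_one]
  have hI : (2 * π * ‖v‖) * ∫ y in (0 : ℝ)..1 / 2, cos (2 * π * ‖v‖ * y) = sin (π * ‖v‖) := by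
    rw [intervalIntegral.mul_integral_comp_mul_left, integral_cos]
    simp only [mul_zero, sin_zero, sub_zero]
    congr 1; ring
  linear_combination (2 * π * ‖v‖ * ∫ y in (0 : ℝ)..1 / 2, cos (2 * π * ‖v‖ * y)) * hV + hI

end BallFourier

theorem quadratic_le_exp_neg {n w z : ℝ} (hn : 3 ≤ n) (hw : 0 < w)
    (h : 101 / 100 * (n + 2) * (n + 4) ≤ 2 * w * n * (n + 4 - w ^ 2)) (hz0 : 0 ≤ z) (hz : z ≤ 1) :
    1 - 2 * w ^ 2 / (n + 2) * z + (n + 2) / (2 * (n + 4)) * (2 * w ^ 2 / (n + 2) * z) ^ 2 ≤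
      exp (-(101 / 100 * w / n) * z) := by
  have h1 : 101 / 100 * w / n ≤
      2 * w ^ 2 / (n + 2) - (n + 2) / (2 * (n + 4)) * (2 * w ^ 2 / (n + 2)) ^ 2 := by
    have e : 2 * w ^ 2 / (n + 2) - (n + 2) / (2 * (n + 4)) * (2 * w ^ 2 / (n + 2)) ^ 2 =
        w * (2 * w * n * (n + 4 - w ^ 2)) / (n * ((n + 2) * (n + 4))) := by
      field_simp
    rw [e, div_le_div_iff₀ (by positivity) (by positivity)]
    calc 101 / 100 * w * (n * ((n + 2) * (n + 4)))
        = w * n * (101 / 100 * (n + 2) * (n + 4)) := by ring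
      _ ≤ w * n * (2 * w * n * (n + 4 - w ^ 2)) := by gcongr
      _ = _ := by ring
  have h2 : 0 ≤ (n + 2) / (2 * (n + 4)) * (2 * w ^ 2 / (n + 2)) ^ 2 := by positivity
  have h3 := add_one_le_exp (-(101 / 100 * w / n) * z)
  nlinarith [mul_le_mul_of_nonneg_right h1 hz0, mul_nonneg h2 (mul_nonneg hz0 (sub_nonneg.2 hz))]

theorem cubic_bound_of_three_le {n w : ℝ} (hn : 3 ≤ n) (hn' : n ≤ 15) (hw : 97 / 50 ≤ w)
    (hw2 : w ^ 2 ≤ 3927 / 5000 * (n + 2)) :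
    101 / 100 * (n + 2) * (n + 4) ≤ 2 * w * n * (n + 4 - w ^ 2) := by
  have h1 : 0 ≤ n + 4 - 3927 / 5000 * (n + 2) := by linarith
  calc 101 / 100 * (n + 2) * (n + 4)
      ≤ 2 * (97 / 50) * n * (n + 4 - 3927 / 5000 * (n + 2)) := by nlinarith
    _ ≤ 2 * w * n * (n + 4 - w ^ 2) := by gcongr

theorem cubic_bound_of_seven_le {n w : ℝ} (hn : 7 ≤ n) (hw : 5 / 2 ≤ w)
    (hw2 : w ^ 2 ≤ 3927 / 5000 * (n + 2)) :
    101 / 100 * (n + 2) * (n + 4) ≤ 2 * w * n * (n + 4 - w ^ 2) := by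
  have h1 : 0 ≤ n + 4 - 3927 / 5000 * (n + 2) := by linarith
  calc 101 / 100 * (n + 2) * (n + 4)
      ≤ 2 * (5 / 2) * n * (n + 4 - 3927 / 5000 * (n + 2)) := by nlinarith
    _ ≤ 2 * w * n * (n + 4 - w ^ 2) := by gcongr

theorem quadratic_le_exp_neg_dim_two {w z : ℝ} (hw0 : 0 < w) (hw : w ^ 2 = π) (hz0 : 0 ≤ z)
    (hz : z ≤ 1) :
    1 - 2 * w ^ 2 / (2 + 2) * z + (2 + 2) / (2 * (2 + 4)) * (2 * w ^ 2 / (2 + 2) * z) ^ 2 ≤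
      exp (-(101 / 100 * w / 2) * z) := by
  have hw1 : w < 1.773 := by nlinarith [pi_lt_d4]
  have hw2 : 1.772 < w := by nlinarith [pi_gt_d4]
  have h1 := add_one_le_exp (-(101 / 400 * w) * z)
  have h2 : exp (-(101 / 100 * w / 2) * z) = exp (-(101 / 400 * w) * z) ^ 2 := by
    rw [← exp_nat_mul]; congr 1; push_cast; ring
  have h0 : 0 ≤ -(101 / 400 * w) * z + 1 := by nlinarith
  rw [h2]
  refine le_trans ?_ (pow_le_pow_left₀ h0 h1 2)
  have e : (-(101 / 400 * w) * z + 1) ^ 2 - (1 - 2 * w ^ 2 / (2 + 2) * z +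
      (2 + 2) / (2 * (2 + 4)) * (2 * w ^ 2 / (2 + 2) * z) ^ 2) =
      z * ((w ^ 2 / 2 - 101 / 200 * w) - ((w ^ 2) ^ 2 / 12 - (101 / 400) ^ 2 * w ^ 2) * z) := by ring
  rw [← sub_nonneg, e, hw]
  refine mul_nonneg hz0 ?_
  have hA : π ^ 2 / 12 - (101 / 400) ^ 2 * π ≤ 0.623 := by nlinarith [pi_gt_d4, pi_lt_d4]
  nlinarith [pi_gt_d4, mul_le_mul_of_nonneg_right hA hz0]

/-- A quadratic in `z ∈ [0, 1]` is bounded below by the endpoint values of a tangent line. -/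
theorem neg_exp_neg_le_quadratic {U c β z : ℝ} (hβ : 0 ≤ β)
    (h0 : β * U ^ 2 ≤ 2) (h1 : U + c ≤ 2 + β * U ^ 2) (hz0 : 0 ≤ z) (hz : z ≤ 1) :
    -exp (-c * z) ≤ 1 - U * z + β * (U * z) ^ 2 := by
  have h := add_one_le_exp (-c * z)
  nlinarith [mul_nonneg (mul_nonneg hβ (sq_nonneg U)) (sq_nonneg (1 - z)),
    mul_nonneg (sub_nonneg.2 h0) (sub_nonneg.2 hz), mul_nonneg (sub_nonneg.2 h1) hz0]

theorem neg_exp_neg_le_linear {n w z : ℝ} (hn : 6 ≤ n) (hw2 : w ^ 2 ≤ 3927 / 5000 * (n + 2))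
    (hz0 : 0 ≤ z) (hz : z ≤ 1) :
    -exp (-(101 / 100 * w / n) * z) ≤ 1 - 2 * w ^ 2 / (n + 2) * z := by
  have hU : 2 * w ^ 2 / (n + 2) ≤ 3927 / 2500 := by
    rw [div_le_iff₀ (by positivity)]; linarith
  have hc : 101 / 100 * w / n ≤ 423 / 1000 := by
    rw [div_le_iff₀ (by positivity)]; nlinarith [sq_nonneg (w - 5 / 2)]
  have h := neg_exp_neg_le_quadratic (U := 2 * w ^ 2 / (n + 2)) (c := 101 / 100 * w / n) le_rfl
    (by norm_num) (by linarith) hz0 hz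
  simpa using h

theorem neg_exp_neg_le_quadratic_low_dim {N : ℕ} {w z : ℝ} (hN2 : 2 ≤ N) (hN5 : N ≤ 5)
    (hw0 : 177 / 100 ≤ w) (hw2 : w ^ 2 ≤ 3927 / 5000 * (N + 2)) (hz0 : 0 ≤ z) (hz : z ≤ 1) :
    -exp (-(101 / 100 * w / N) * z) ≤ 1 - 2 * w ^ 2 / (N + 2) * z +
      12 * (1 / 24 - w ^ 2 / 180) * ((N + 2) / (N + 4)) * (2 * w ^ 2 / (N + 2) * z) ^ 2 := by
  have hw3 : 3.1329 ≤ w ^ 2 := by nlinarith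
  set s := w ^ 2 with hs
  have hκ : 0 ≤ 1 / 24 - s / 180 := by
    have : (N : ℝ) ≤ 5 := by exact_mod_cast hN5
    linarith
  refine neg_exp_neg_le_quadratic (by positivity) ?_ ?_ hz0 hz
  · interval_cases N <;> norm_num at hw2 ⊢
    all_goals nlinarith
  · interval_cases N <;> norm_num at hw2 ⊢
    · have : w ≤ 1.7728 := by nlinarith
      nlinarith
    · have : w ≤ 1.982 := by nlinarith
      nlinarith
    · have : w ≤ 2.171 := by nlinarith
      nlinarith
    · have : w ≤ 2.345 := by nlinarith
      nlinarith

theorem volume_closedBall_eq_one_of_pow_eq {N : ℕ} (hN : 1 ≤ N) {r : ℝ} (hr : 0 < r)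
    (h : (√π * r) ^ N = Gamma ((N : ℝ) / 2 + 1)) :
    volume (Metric.closedBall (0 : EuclideanSpace ℝ (Fin N)) r) = 1 := by
  have : Nonempty (Fin N) := ⟨⟨0, hN⟩⟩
  have hG : 0 < Gamma ((N : ℝ) / 2 + 1) := Gamma_pos_of_pos (by positivity)
  rw [EuclideanSpace.volume_closedBall, Fintype.card_fin, ← ENNReal.ofReal_pow hr.le,
    ← ENNReal.ofReal_mul (by positivity), ← mul_div_assoc, ← mul_pow, mul_comm r, h,
    div_self hG.ne', ENNReal.ofReal_one]

theorem abs_setIntegral_closedBall_cos_le_dim_one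
    (hB : volume (Metric.closedBall (0 : EuclideanSpace ℝ (Fin 1)) (1 / 2)) = 1)
    {v : EuclideanSpace ℝ (Fin 1)} (hv : ‖v‖ ≤ 1) :
    |∫ x in Metric.closedBall (0 : EuclideanSpace ℝ (Fin 1)) (1 / 2), cos (2 * π * ⟪x, v⟫)| ≤
      exp (-(π ^ 2 / 6) * ‖v‖ ^ 2) := by
  rcases (norm_nonneg v).eq_or_lt with h0 | h0
  · obtain rfl : v = 0 := norm_eq_zero.1 h0.symm
    simp only [inner_zero_right, mul_zero, cos_zero, setIntegral_const, Measure.real, hB]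
    simp
  · have h := norm_mul_setIntegral_closedBall_cos_dim_one hB v
    have hp : 0 < π * ‖v‖ := by positivity
    have hsin : 0 ≤ sin (π * ‖v‖) :=
      sin_nonneg_of_nonneg_of_le_pi hp.le (by nlinarith [pi_pos])
    have hle := sin_pi_mul_le_mul_exp h0.le hv
    rw [← h] at hsin hle
    rw [abs_of_nonneg (nonneg_of_mul_nonneg_right hsin hp)]
    exact le_of_mul_le_mul_left hle hp

theorem abs_setIntegral_closedBall_cos_le {N : ℕ} (hN : 2 ≤ N) {r : ℝ} (hr : 0 < r)
    (h : (√π * r) ^ N = Gamma ((N : ℝ) / 2 + 1))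
    {v : EuclideanSpace ℝ (Fin N)} (hv : ‖v‖ ≤ 1) :
    |∫ x in Metric.closedBall (0 : EuclideanSpace ℝ (Fin N)) r, cos (2 * π * ⟪x, v⟫)| ≤
      exp (-(101 / 100 * (π * r) / N) * ‖v‖ ^ 2) := by
  have hN1 : 1 ≤ N := by omega
  have hN0 : N ≠ 0 := by omega
  have hB := volume_closedBall_eq_one_of_pow_eq hN1 hr h
  set a := (√π * r) ^ 2 with ha
  have ha0 : 0 ≤ a := sq_nonneg _
  have haN : a ^ N = Gamma ((N : ℝ) / 2 + 1) ^ 2 := by rw [ha, pow_right_comm, h]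
  have hw : (π * r) ^ 2 = π * a := by rw [ha, mul_pow, mul_pow, sq_sqrt pi_nonneg]; ring
  have hw0 : 0 < π * r := by positivity
  have ha_le : a ≤ ((N : ℝ) + 2) / 4 :=
    le_of_pow_le_pow_left₀ hN0 (by positivity) (haN ▸ Gamma_half_sq_le N hN)
  have hw_le : (π * r) ^ 2 ≤ 3927 / 5000 * ((N : ℝ) + 2) := by
    rw [hw]; nlinarith [pi_lt_d4, pi_pos, mul_le_mul_of_nonneg_left ha_le pi_nonneg]
  have hz0 : 0 ≤ ‖v‖ ^ 2 := sq_nonneg _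
  have hz1 : ‖v‖ ^ 2 ≤ 1 := pow_le_one₀ (norm_nonneg v) hv
  have hw_ge {A : ℝ} (hA : A ^ N ≤ Gamma ((N : ℝ) / 2 + 1) ^ 2) : 3.1415 * A ≤ (π * r) ^ 2 := by
    have : A ≤ a := le_of_pow_le_pow_left₀ hN0 ha0 (haN ▸ hA)
    rw [hw]; nlinarith [pi_gt_d4]
  have h_two (h2 : N = 2) : (π * r) ^ 2 = π := by
    subst h2
    rw [sq_Gamma_two_half_add_one] at haN
    rw [hw, (pow_eq_one_iff_of_nonneg ha0 two_ne_zero).1 haN, mul_one]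
  have h_three (h3 : 3 ≤ N) : 97 / 50 ≤ π * r := by
    have := hw_ge (pow_le_Gamma_half_sq N h3)
    nlinarith
  rw [abs_le]
  constructor
  · rcases le_or_gt N 5 with h5 | h5
    · refine (neg_exp_neg_le_quadratic_low_dim hN h5 ?_ hw_le hz0 hz1).trans
        (le_setIntegral_closedBall_cos_of_norm_le_one hN1 hr hB hv)
      rcases hN.eq_or_lt with h2 | h2
      · nlinarith [h_two h2.symm, pi_gt_d4]
      · linarith [h_three h2]
    · exact (neg_exp_neg_le_linear (by exact_mod_cast h5) hw_le hz0 hz1).trans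
        (le_setIntegral_closedBall_cos hN1 hr hB v)
  · refine (setIntegral_closedBall_cos_le hN1 hr hB v).trans ?_
    rcases hN.eq_or_lt with h2 | h2
    · have := quadratic_le_exp_neg_dim_two hw0 (h_two h2.symm) hz0 hz1
      have hN2 : (N : ℝ) = 2 := by exact_mod_cast h2.symm
      rwa [hN2]
    · have hN3 : (3 : ℝ) ≤ N := by exact_mod_cast h2
      refine quadratic_le_exp_neg hN3 hw0 ?_ hz0 hz1
      rcases lt_or_ge N 7 with h7 | h7
      · have : (N : ℝ) < 7 := by exact_mod_cast h7
        exact cubic_bound_of_three_le hN3 (by linarith) (h_three h2) hw_le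
      · refine cubic_bound_of_seven_le (by exact_mod_cast h7) ?_ hw_le
        have := hw_ge (two_pow_le_Gamma_half_sq N h7)
        nlinarith

/-- Gaussian upper bound on the unit ball for the Fourier transform of the indicator of the
unit-volume Euclidean ball in `ℝ^N`: there exists `c > π r_N / N` such that
`|χ̂_B(ζ)| ≤ e^{-c|ζ|²}` for all `|ζ| ≤ 1`. -/
theorem fourier_ball_gaussian_bound (N : ℕ) (hN : 1 ≤ N)
    (rN : ℝ) (hrN : rN = (π : ℝ) ^ (-(1:ℝ)/2) * (Real.Gamma ((N:ℝ)/2 + 1)) ^ ((1:ℝ)/N)) :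
    ∃ c : ℝ, π * rN / N < c ∧
      ∀ ζ : EuclideanSpace ℝ (Fin N), ‖ζ‖ ≤ 1 →
        ‖∫ x in Metric.closedBall (0 : EuclideanSpace ℝ (Fin N)) rN,
            Complex.exp (-(2 * (π:ℂ) * Complex.I) * (⟪x, ζ⟫ : ℝ))‖
          ≤ Real.exp (-c * ‖ζ‖ ^ 2) := by
  have hG : 0 < Gamma ((N : ℝ) / 2 + 1) := Gamma_pos_of_pos (by positivity)
  have hr : 0 < rN := by rw [hrN]; positivity
  have hpow : (√π * rN) ^ N = Gamma ((N : ℝ) / 2 + 1) := by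
    have : √π * (π : ℝ) ^ (-(1:ℝ)/2) = 1 := by
      rw [sqrt_eq_rpow, ← rpow_add pi_pos]; norm_num
    rw [hrN, ← mul_assoc, this, one_mul, one_div, rpow_inv_natCast_pow hG.le (by omega)]
  simp only [setIntegral_closedBall_cexp_inner, Complex.norm_real, norm_eq_abs]
  rcases hN.eq_or_lt with rfl | h2
  · obtain rfl : rN = 1 / 2 := by
      have h3 : Gamma (((1 : ℕ) : ℝ) / 2 + 1) = √π * (1 / 2) := by
        rw [Nat.cast_one, Gamma_add_one (by norm_num), Gamma_one_half_eq, mul_comm]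
      rw [pow_one, h3] at hpow
      exact mul_left_cancel₀ (sqrt_pos.2 pi_pos).ne' hpow
    refine ⟨π ^ 2 / 6, ?_, fun ζ hζ => abs_setIntegral_closedBall_cos_le_dim_one
      (volume_closedBall_eq_one_of_pow_eq hN hr hpow) hζ⟩
    norm_num
    nlinarith [pi_gt_three]
  · refine ⟨101 / 100 * (π * rN) / N, ?_, fun ζ hζ =>
      abs_setIntegral_closedBall_cos_le h2 hr hpow hζ⟩
    exact div_lt_div_of_pos_right (by linarith [mul_pos pi_pos hr]) (by positivity)
end

section
/- Let m̃ be the Fourier transform of the unit-mass surface measure of the sphere of radius R in ℝ^N, N ≥ 3. If α ≥ 1 and 2πR|ζ| < 1, then there exists C' < 1 (depending on N, α) such that for all 1 ≤ r ≤ 2, |(d/dr)^α m̃(rζ)| ≤ C' (2πR|ζ|)². -/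
open MeasureTheory Real intervalIntegral

/-- The Fourier transform of the unit-mass surface measure of the sphere of radius `R`
in `ℝ^N`, given by `m̃(ζ) = (Γ(N/2)/(Γ((N-1)/2)√π)) ∫_{-1}^1 e^{2πiR|ζ|t}(1-t²)^{(N-3)/2} dt`. -/
noncomputable def sphereFT (N : ℕ) (R : ℝ) (ζ : EuclideanSpace ℝ (Fin N)) : ℂ :=
  ((Real.Gamma ((N:ℝ)/2) / (Real.Gamma (((N:ℝ) - 1)/2) * Real.sqrt π)) : ℝ) *
    ∫ t in (-1:ℝ)..1,
      Complex.exp (2 * (π:ℂ) * Complex.I * (R * ‖ζ‖ * t : ℝ)) *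
        ((1 - t^2 : ℝ) ^ (((N:ℝ) - 3)/2) : ℝ)

/-- The total mass of the Gegenbauer weight `(1 - t²)^(s - 1)` on `[-1, 1]`. -/
lemma integral_one_sub_sq_rpow {s : ℝ} (hs : 0 < s) :
    ∫ t in (-1:ℝ)..1, (1 - t ^ 2) ^ (s - 1) =
      Real.sqrt π * Real.Gamma s / Real.Gamma (s + 1 / 2) := by
  have hbeta : ∫ x in (0:ℝ)..1, x ^ (s - 1) * (1 - x) ^ (s - 1) =
      Real.Gamma s * Real.Gamma s / Real.Gamma (2 * s) := by
    have h := Complex.betaIntegral_eq_Gamma_mul_div (s : ℂ) s (by simpa) (by simpa)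
    have hcast : Complex.betaIntegral s s =
        ((∫ x in (0:ℝ)..1, x ^ (s - 1) * (1 - x) ^ (s - 1) : ℝ) : ℂ) := by
      rw [Complex.betaIntegral, ← intervalIntegral.integral_ofReal]
      refine intervalIntegral.integral_congr fun x hx => ?_
      rw [Set.uIcc_of_le zero_le_one] at hx
      have h1 : 0 ≤ 1 - x := by linarith [hx.2]
      simp only [Complex.ofReal_mul, Complex.ofReal_cpow hx.1, Complex.ofReal_cpow h1]
      push_cast
      rfl
    rw [hcast, ← Complex.ofReal_add, Complex.Gamma_ofReal, Complex.Gamma_ofReal] at h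
    rw [two_mul]
    exact_mod_cast h
  have hsub : ∫ x in (0:ℝ)..1, (1 - (2 * x - 1) ^ 2) ^ (s - 1) =
      2⁻¹ * ∫ t in (-1:ℝ)..1, (1 - t ^ 2) ^ (s - 1) := by
    have := intervalIntegral.integral_comp_mul_sub (a := 0) (b := 1)
      (fun t : ℝ => (1 - t ^ 2) ^ (s - 1)) (two_ne_zero' ℝ) 1
    norm_num at this ⊢
    exact this
  have hfactor : ∫ x in (0:ℝ)..1, (1 - (2 * x - 1) ^ 2) ^ (s - 1) =
      4 ^ (s - 1) * ∫ x in (0:ℝ)..1, x ^ (s - 1) * (1 - x) ^ (s - 1) := by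
    rw [← intervalIntegral.integral_const_mul]
    refine intervalIntegral.integral_congr fun x hx => ?_
    rw [Set.uIcc_of_le zero_le_one] at hx
    have h1 : 0 ≤ 1 - x := by linarith [hx.2]
    rw [← Real.mul_rpow hx.1 h1, ← Real.mul_rpow (by norm_num) (mul_nonneg hx.1 h1)]
    congr 1
    ring
  have hdup := Real.Gamma_mul_Gamma_add_half_of_pos hs
  have h4 : (4:ℝ) ^ (s - 1) * 2 * 2 ^ (1 - 2 * s) = 1 := by
    rw [show (4:ℝ) = 2 ^ (2:ℝ) by norm_num, ← Real.rpow_mul (by norm_num),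
      ← Real.rpow_add_one (by norm_num), ← Real.rpow_add (by norm_num)]
    ring_nf
    simp
  have hG1 := (Real.Gamma_pos_of_pos (show 0 < s + 1 / 2 by linarith)).ne'
  have hG2 := (Real.Gamma_pos_of_pos (show 0 < 2 * s by linarith)).ne'
  have hI : ∫ t in (-1:ℝ)..1, (1 - t ^ 2) ^ (s - 1) =
      4 ^ (s - 1) * 2 * (Real.Gamma s * Real.Gamma s / Real.Gamma (2 * s)) := by
    rw [← hbeta]
    linarith
  rw [hI, eq_div_iff hG1]
  calc _ = 4 ^ (s - 1) * 2 * Real.Gamma s / Real.Gamma (2 * s) *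
        (Real.Gamma s * Real.Gamma (s + 1 / 2)) := by ring
    _ = Real.Gamma (2 * s) / Real.Gamma (2 * s) * (4 ^ (s - 1) * 2 * 2 ^ (1 - 2 * s)) *
        (√π * Real.Gamma s) := by rw [hdup]; ring
    _ = √π * Real.Gamma s := by rw [h4, div_self hG2, one_mul, one_mul]

/-- The second moment of the normalized Gegenbauer weight. -/
lemma normalized_second_moment {s : ℝ} (hs : 1 ≤ s) :
    Real.Gamma (s + 1 / 2) / (Real.Gamma s * Real.sqrt π) *
      ∫ t in (-1:ℝ)..1, t ^ 2 * (1 - t ^ 2) ^ (s - 1) = 1 / (2 * s + 1) := by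
  have hs0 : 0 < s := by linarith
  have hint (p : ℝ) (hp : 0 ≤ p) :
      IntervalIntegrable (fun t : ℝ => (1 - t ^ 2) ^ p) volume (-1) 1 :=
    (Continuous.rpow_const (by fun_prop) fun _ => Or.inr hp).intervalIntegrable _ _
  have hsplit : ∫ t in (-1:ℝ)..1, t ^ 2 * (1 - t ^ 2) ^ (s - 1) =
      (∫ t in (-1:ℝ)..1, (1 - t ^ 2) ^ (s - 1)) -
        ∫ t in (-1:ℝ)..1, (1 - t ^ 2) ^ (s + 1 - 1) := by
    rw [← intervalIntegral.integral_sub (hint _ (by linarith)) (hint _ (by linarith))]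
    refine intervalIntegral.integral_congr fun t ht => ?_
    rw [Set.uIcc_of_le (by norm_num)] at ht
    have h0 : 0 ≤ 1 - t ^ 2 := by nlinarith [ht.1, ht.2]
    rw [show s + 1 - 1 = (s - 1) + 1 by ring,
      Real.rpow_add_of_nonneg h0 (by linarith) zero_le_one, Real.rpow_one]
    ring
  rw [hsplit, integral_one_sub_sq_rpow hs0, integral_one_sub_sq_rpow (by linarith),
    show s + 1 + 1 / 2 = (s + 1 / 2) + 1 by ring, Real.Gamma_add_one hs0.ne',
    Real.Gamma_add_one (show s + 1 / 2 ≠ 0 by linarith)]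
  have hG := (Real.Gamma_pos_of_pos hs0).ne'
  have hG1 := (Real.Gamma_pos_of_pos (show 0 < s + 1 / 2 by linarith)).ne'
  have hpi := (Real.sqrt_pos.2 Real.pi_pos).ne'
  have h1 : s + 1 / 2 ≠ 0 := by linarith
  have h2 : 2 * s + 1 ≠ 0 := by linarith
  field_simp
  ring

/-- Iterated derivatives of `s ↦ ∫ e^{iast} w(t) dt` may be taken under the integral sign. -/
lemma iteratedDeriv_integral_exp_mul {w : ℝ → ℝ} (hw : Continuous w) (a : ℝ) (n : ℕ) :
    iteratedDeriv n (fun s : ℝ => ∫ t in (-1:ℝ)..1,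
        Complex.exp (Complex.I * (a * s * t : ℝ)) * (w t : ℂ)) =
      fun s : ℝ => ∫ t in (-1:ℝ)..1,
        (Complex.I * (a * t : ℝ)) ^ n * Complex.exp (Complex.I * (a * s * t : ℝ)) * (w t : ℂ) := by
  induction n with
  | zero => simp [iteratedDeriv_zero]
  | succ n ih =>
    rw [iteratedDeriv_succ, ih]
    funext s
    refine HasDerivAt.deriv (intervalIntegral.hasDerivAt_integral_of_dominated_loc_of_deriv_le
      (bound := fun t => |a * t| ^ (n + 1) * |w t|) (F' := fun (s t : ℝ) =>
        (Complex.I * (a * t : ℝ)) ^ (n + 1) * Complex.exp (Complex.I * (a * s * t : ℝ)) *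
          (w t : ℂ)) Filter.univ_mem ?_ ?_ ?_ ?_ ?_ ?_).2
    · exact .of_forall fun x => (by fun_prop : Continuous _).aestronglyMeasurable
    · exact (by fun_prop : Continuous _).intervalIntegrable _ _
    · exact (by fun_prop : Continuous _).aestronglyMeasurable
    · refine .of_forall fun t _ x _ => le_of_eq ?_
      rw [norm_mul, norm_mul, norm_pow, norm_mul, Complex.norm_exp_I_mul_ofReal]
      simp
    · exact (by fun_prop : Continuous _).intervalIntegrable _ _
    · refine .of_forall fun t _ x _ => ?_
      have h0 : HasDerivAt (fun x : ℝ => a * x * t) (a * t) x := by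
        simpa using ((hasDerivAt_id x).const_mul a).mul_const t
      have h := (((h0.ofReal_comp.const_mul Complex.I).cexp.const_mul
        ((Complex.I * (a * t : ℝ)) ^ n)).mul_const (w t : ℂ))
      exact h.congr_deriv (by ring)

/-- The derivatives of order at least one are controlled by the second moment of the weight. -/
lemma norm_integral_pow_mul_exp_mul_le {w : ℝ → ℝ} (hw : Continuous w)
    (hw0 : ∀ t ∈ Set.Icc (-1:ℝ) 1, 0 ≤ w t) (heven : ∀ t, w (-t) = w t)
    {a r : ℝ} (ha0 : 0 ≤ a) (ha1 : a ≤ 1) (hr1 : 1 ≤ r) {n : ℕ} (hn : 1 ≤ n) :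
    ‖∫ t in (-1:ℝ)..1,
        (Complex.I * (a * t : ℝ)) ^ n * Complex.exp (Complex.I * (a * r * t : ℝ)) * (w t : ℂ)‖ ≤
      r * a ^ 2 * ∫ t in (-1:ℝ)..1, t ^ 2 * w t := by
  have key : ∀ F : ℝ → ℂ, (∀ t ∈ Set.Icc (-1:ℝ) 1, ‖F t‖ ≤ r * a ^ 2 * t ^ 2 * w t) →
      ‖∫ t in (-1:ℝ)..1, F t‖ ≤ r * a ^ 2 * ∫ t in (-1:ℝ)..1, t ^ 2 * w t := by
    intro F hF
    rw [← intervalIntegral.integral_const_mul]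
    refine intervalIntegral.norm_integral_le_of_norm_le (by norm_num)
      (.of_forall fun t ht => ?_) ((by fun_prop : Continuous _).intervalIntegrable _ _)
    rw [← mul_assoc]
    exact hF t ⟨ht.1.le, ht.2⟩
  rcases hn.eq_or_lt with rfl | hn2
  · have hodd : ∫ t in (-1:ℝ)..1, (Complex.I * (a * t : ℝ)) * (w t : ℂ) = 0 := by
      have h := intervalIntegral.integral_comp_neg (a := -1) (b := 1)
        (fun t : ℝ => (Complex.I * (a * t : ℝ)) * (w t : ℂ))
      simp only [heven, neg_neg, mul_neg, Complex.ofReal_neg, neg_mul,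
        intervalIntegral.integral_neg] at h
      exact self_eq_neg.1 h.symm
    have hsub : ∫ t in (-1:ℝ)..1, (Complex.I * (a * t : ℝ)) ^ 1 *
          Complex.exp (Complex.I * (a * r * t : ℝ)) * (w t : ℂ) =
        ∫ t in (-1:ℝ)..1, (Complex.I * (a * t : ℝ)) *
          (Complex.exp (Complex.I * (a * r * t : ℝ)) - 1) * (w t : ℂ) := by
      rw [← sub_zero (∫ t in (-1:ℝ)..1, (Complex.I * (a * t : ℝ)) ^ 1 *
          Complex.exp (Complex.I * (a * r * t : ℝ)) * (w t : ℂ)), ← hodd,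
        ← intervalIntegral.integral_sub ((by fun_prop : Continuous _).intervalIntegrable _ _)
          ((by fun_prop : Continuous _).intervalIntegrable _ _)]
      congr 1
      funext t
      ring
    rw [hsub]
    refine key _ fun t ht => ?_
    have hexp := Real.norm_exp_I_mul_ofReal_sub_one_le (x := a * r * t)
    rw [norm_mul, norm_mul, norm_mul, Complex.norm_I, Complex.norm_real, Complex.norm_real,
      Real.norm_of_nonneg (hw0 t ht), one_mul]
    refine mul_le_mul_of_nonneg_right ?_ (hw0 t ht)
    calc ‖a * t‖ * ‖Complex.exp (Complex.I * (a * r * t : ℝ)) - 1‖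
        ≤ ‖a * t‖ * ‖a * r * t‖ := by gcongr
      _ = r * a ^ 2 * t ^ 2 := by
        rw [← norm_mul, show a * t * (a * r * t) = r * a ^ 2 * t ^ 2 by ring,
          Real.norm_of_nonneg (by positivity)]
  · refine key _ fun t ht => ?_
    rw [norm_mul, norm_mul, norm_pow, norm_mul, Complex.norm_exp_I_mul_ofReal, Complex.norm_I,
      Complex.norm_real, Complex.norm_real, Real.norm_of_nonneg (hw0 t ht), one_mul, mul_one]
    refine mul_le_mul_of_nonneg_right ?_ (hw0 t ht)
    have hat : ‖a * t‖ ≤ 1 := by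
      rw [norm_mul, Real.norm_of_nonneg ha0]
      exact mul_le_one₀ ha1 (norm_nonneg t) (abs_le.2 ht)
    calc ‖a * t‖ ^ n ≤ ‖a * t‖ ^ 2 := pow_le_pow_of_le_one (norm_nonneg _) hat hn2
      _ = 1 * (a ^ 2 * t ^ 2) := by rw [Real.norm_eq_abs, sq_abs]; ring
      _ ≤ r * (a ^ 2 * t ^ 2) := by gcongr
      _ = r * a ^ 2 * t ^ 2 := by ring

/-- Small-frequency derivative bound: if `α ≥ 1` and `2πR|ζ| < 1` then there is `C' < 1`
(depending on `N`, `α`) with `|(d/dr)^α m̃(rζ)| ≤ C' (2πR|ζ|)²` for all `1 ≤ r ≤ 2`. -/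
theorem sphereFT_deriv_small_bound (N : ℕ) (hN : 3 ≤ N) (R : ℝ) (hR : 0 < R)
    (hRsurf : R ^ (N - 1) = Real.Gamma ((N:ℝ)/2) / (2 * (π : ℝ) ^ ((N:ℝ)/2)))
    (α : ℕ) (hα : 1 ≤ α) :
    ∃ C' : ℝ, C' < 1 ∧
      ∀ ζ : EuclideanSpace ℝ (Fin N), 2 * π * R * ‖ζ‖ < 1 →
        ∀ r : ℝ, 1 ≤ r → r ≤ 2 →
          ‖iteratedDeriv α (fun s : ℝ => sphereFT N R (s • ζ)) r‖
            ≤ C' * (2 * π * R * ‖ζ‖) ^ 2 := by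
  have hN3 : (3:ℝ) ≤ N := by exact_mod_cast hN
  refine ⟨2 / 3, by norm_num, fun ζ hζ r hr1 hr2 => ?_⟩
  set a : ℝ := 2 * π * R * ‖ζ‖ with ha
  set c : ℝ := Real.Gamma ((N:ℝ)/2) / (Real.Gamma (((N:ℝ) - 1)/2) * Real.sqrt π) with hc
  set w : ℝ → ℝ := fun t => (1 - t ^ 2) ^ (((N:ℝ) - 3)/2) with hwdef
  have hw : Continuous w :=
    Continuous.rpow_const (by fun_prop) fun _ => Or.inr (by linarith)
  have hw0 : ∀ t ∈ Set.Icc (-1:ℝ) 1, 0 ≤ w t := fun t ht =>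
    Real.rpow_nonneg (by nlinarith [ht.1, ht.2]) _
  have heven : ∀ t, w (-t) = w t := fun t => by simp [hwdef]
  have ha0 : 0 ≤ a := by positivity
  have hc0 : 0 ≤ c :=
    div_nonneg (Real.Gamma_pos_of_pos (by linarith)).le
      (mul_nonneg (Real.Gamma_pos_of_pos (by linarith)).le (Real.sqrt_nonneg _))
  have hmoment : c * ∫ t in (-1:ℝ)..1, t ^ 2 * w t = 1 / N := by
    have h := normalized_second_moment (s := ((N:ℝ) - 1) / 2) (by linarith)
    rw [show ((N:ℝ) - 1) / 2 + 1 / 2 = N / 2 by ring,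
      show ((N:ℝ) - 1) / 2 - 1 = (N - 3) / 2 by ring,
      show 2 * (((N:ℝ) - 1) / 2) + 1 = N by ring] at h
    exact h
  have hloc : (fun s : ℝ => sphereFT N R (s • ζ)) =ᶠ[nhds r] fun s : ℝ => (c : ℂ) *
      ∫ t in (-1:ℝ)..1, Complex.exp (Complex.I * (a * s * t : ℝ)) * (w t : ℂ) := by
    filter_upwards [lt_mem_nhds (show 0 < r by linarith)] with s hs
    rw [sphereFT, norm_smul, Real.norm_of_nonneg hs.le]
    congr 2
    funext t
    congr 2
    rw [ha]
    push_cast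
    ring
  rw [hloc.iteratedDeriv_eq, iteratedDeriv_const_mul_field,
    iteratedDeriv_integral_exp_mul hw, norm_mul, Complex.norm_real, Real.norm_of_nonneg hc0]
  calc c * _ ≤ c * (r * a ^ 2 * ∫ t in (-1:ℝ)..1, t ^ 2 * w t) := by
        gcongr
        exact norm_integral_pow_mul_exp_mul_le hw hw0 heven ha0 hζ.le hr1 hα
    _ = r * a ^ 2 * (1 / N) := by rw [← hmoment]; ring
    _ ≤ 2 * a ^ 2 * (1 / 3) := by gcongr
    _ = 2 / 3 * a ^ 2 := by ring
end
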